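/- arXiv:2106.06864 — 2 statements merged into one kernel-verified Lean document; each statement's English description precedes it below -/
import Mathlib

section
/- Let (a_1, a_2, a_3) be a triple of nonnegative integers with a_1 + a_2 + a_3 even. Then N(a_1, a_2, a_3) ≠ 0 (i.e., there is a path within 3 glass plates corresponding to (a_1, a_2, a_3)) if and only if a_1 + a_2 ≥ a_3, a_2 + a_3 ≥ a_1, and a_3 + a_1 ≥ a_2. -/
/-- A word (list over `ℕ`) is down-up alternating if `w 1 > w 2 < w 3 > w 4 < ⋯`
(1-indexed). -/
def DownUpAlt (w : List ℕ) : Prop :=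
  ∀ k : ℕ, k + 1 < w.length →
    if k % 2 = 0 then w.getD (k + 1) 0 < w.getD k 0 else w.getD k 0 < w.getD (k + 1) 0

/-- `N3 a b c` is the number of down-up alternating words over `{1,2,3}` that are
empty or have first letter `≥ 2`, containing exactly `a` ones, `b` twos and
`c` threes. -/
noncomputable def N3 (a b c : ℕ) : ℕ :=
  Nat.card {w : List ℕ // (∀ x ∈ w, 1 ≤ x ∧ x ≤ 3) ∧ DownUpAlt w ∧
    (w = [] ∨ 2 ≤ w.headI) ∧
    w.count 1 = a ∧ w.count 2 = b ∧ w.count 3 = c}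

theorem DownUpAlt.of_cons_cons {x y : ℕ} {t : List ℕ} (h : DownUpAlt (x :: y :: t)) :
    y < x ∧ DownUpAlt t := by
  refine ⟨by simpa using h 0 (by simp), fun k hk => ?_⟩
  have := h (k + 2) (by simp only [List.length_cons]; omega)
  simpa [Nat.add_right_comm k 2 1] using this

theorem DownUpAlt.cons_cons {x y : ℕ} {t : List ℕ} (ht : DownUpAlt t) (hyx : y < x)
    (hy : t = [] ∨ y < t.headI) : DownUpAlt (x :: y :: t) := by
  intro k hk
  match k with
  | 0 => simpa using hyx
  | 1 =>
    cases t with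
    | nil => simp at hk
    | cons z t => simpa using hy
  | k + 2 =>
    have := ht k (by simp only [List.length_cons] at hk; omega)
    simpa [Nat.add_right_comm k 2 1] using this

theorem length_eq_count_add_count_add_count {w : List ℕ} (hw : ∀ x ∈ w, 1 ≤ x ∧ x ≤ 3) :
    w.length = w.count 1 + w.count 2 + w.count 3 := by
  induction w with
  | nil => rfl
  | cons x t ih =>
    rw [List.forall_mem_cons] at hw
    obtain ⟨⟨h1, h3⟩, ht⟩ := hw
    have := ih ht
    interval_cases x <;> simp <;> omega

/-- In a down-up alternating word of even length, no letter makes up more than half of the word,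
since each of the successive descents `w 1 > w 2`, `w 3 > w 4`, … uses two distinct letters. -/
theorem DownUpAlt.two_mul_count_le_length (a : ℕ) :
    ∀ {w : List ℕ}, DownUpAlt w → Even w.length → 2 * w.count a ≤ w.length
  | [], _, _ => by simp
  | [_], _, he => by simp at he
  | x :: y :: t, h, he => by
    obtain ⟨hyx, ht⟩ := h.of_cons_cons
    have ih := ht.two_mul_count_le_length a
      (by simpa [Nat.even_add_one] using he)
    simp only [List.count_cons, List.length_cons, beq_iff_eq]
    split_ifs <;> omega

/-- The letters, alternation and counts of the words `(21)^p (31)^q (32)^r`. -/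
theorem exists_downUpAlt (p q r : ℕ) :
    ∃ w : List ℕ, (∀ x ∈ w, 1 ≤ x ∧ x ≤ 3) ∧ DownUpAlt w ∧ (w = [] ∨ 2 ≤ w.headI) ∧
      (p = 0 → w = [] ∨ w.headI = 3) ∧
      w.count 1 = p + q ∧ w.count 2 = p + r ∧ w.count 3 = q + r := by
  induction p with
  | succ p ih =>
    obtain ⟨w, hw, ha, hh, -, h1, h2, h3⟩ := ih
    exact ⟨2 :: 1 :: w, by simpa using hw, ha.cons_cons (by simp) (hh.imp_right (by omega)),
      by simp, by simp, by simp [h1]; omega, by simp [h2]; omega, by simp [h3]⟩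
  | zero =>
    induction q with
    | succ q ih =>
      obtain ⟨w, hw, ha, hh, -, h1, h2, h3⟩ := ih
      exact ⟨3 :: 1 :: w, by simpa using hw, ha.cons_cons (by simp) (hh.imp_right (by omega)),
        by simp, by simp, by simp [h1], by simp [h2], by simp [h3]; omega⟩
    | zero =>
      induction r with
      | succ r ih =>
        obtain ⟨w, hw, ha, -, hh, h1, h2, h3⟩ := ih
        exact ⟨3 :: 2 :: w, by simpa using hw,
          ha.cons_cons (by simp) ((hh rfl).imp_right (by omega)),
          by simp, by simp, by simp [h1], by simp [h2], by simp [h3]⟩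
      | zero => exact ⟨[], by simp, fun k hk => by simp at hk, by simp⟩

theorem finite_setOf_count_eq (a b c : ℕ) :
    {w : List ℕ | (∀ x ∈ w, 1 ≤ x ∧ x ≤ 3) ∧
      w.count 1 = a ∧ w.count 2 = b ∧ w.count 3 = c}.Finite := by
  refine (List.finite_toSet
    (List.replicate a 1 ++ List.replicate b 2 ++ List.replicate c 3).permutations).subset ?_
  rintro w ⟨hw, rfl, rfl, rfl⟩
  rw [Set.mem_ofPred_eq, List.mem_permutations, List.perm_iff_count]
  intro x
  by_cases hx : x ∈ w
  · obtain ⟨h1, h3⟩ := hw x hx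
    interval_cases x <;> simp [List.count_replicate]
  · have h0 := List.count_eq_zero_of_not_mem hx
    simp only [List.count_append, List.count_replicate, beq_iff_eq]
    split_ifs <;> subst_vars <;> omega

theorem stmt17 (a1 a2 a3 : ℕ) (h : Even (a1 + a2 + a3)) :
    N3 a1 a2 a3 ≠ 0 ↔ a3 ≤ a1 + a2 ∧ a1 ≤ a2 + a3 ∧ a2 ≤ a3 + a1 := by
  rw [N3, Nat.card_ne_zero]
  constructor
  · rintro ⟨⟨w, hw, ha, -, rfl, rfl, rfl⟩, -⟩
    have hl := length_eq_count_add_count_add_count hw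
    rw [← hl] at h
    have h1 := ha.two_mul_count_le_length 1 h
    have h2 := ha.two_mul_count_le_length 2 h
    have h3 := ha.two_mul_count_le_length 3 h
    omega
  · rintro ⟨h3, h1, h2⟩
    obtain ⟨m, hm⟩ := h
    constructor
    · obtain ⟨w, hw, ha, hh, -, c1, c2, c3⟩ := exists_downUpAlt (m - a3) (m - a2) (m - a1)
      exact ⟨w, hw, ha, hh, by omega, by omega, by omega⟩
    · refine Set.Finite.to_subtype ((finite_setOf_count_eq a1 a2 a3).subset ?_)
      rintro w ⟨hw, -, -, hc⟩
      exact ⟨hw, hc⟩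
end

section
/- For every integer n ≥ 1, the number of triples (a_1, a_2, a_3) of nonnegative integers with a_1 + a_2 + a_3 = 2n + 1 and N(a_1, a_2, a_3) ≠ 0 equals C(n+2, 2) + 1, where C denotes the binomial coefficient. -/
theorem downUpAlt_cons_cons_cons {x y z : ℕ} {t : List ℕ} :
    DownUpAlt (x :: y :: z :: t) ↔ y < x ∧ y < z ∧ DownUpAlt (z :: t) := by
  constructor
  · intro h
    refine ⟨by simpa using h 0 (by simp), by simpa using h 1 (by simp), fun k hk => ?_⟩
    simpa using h (k + 2) (by simpa using hk)
  · rintro ⟨hxy, hyz, h⟩ k hk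
    match k with
    | 0 => simpa using hxy
    | 1 => simpa using hyz
    | k + 2 => simpa using h k (by simpa using hk)

theorem downUpAlt_singleton (x : ℕ) : DownUpAlt [x] := by
  intro k hk
  simp at hk

theorem count_add_count_add_count_eq_length {w : List ℕ} (hw : ∀ x ∈ w, 1 ≤ x ∧ x ≤ 3) :
    w.count 1 + w.count 2 + w.count 3 = w.length := by
  induction w with
  | nil => simp
  | cons x t ih =>
    obtain ⟨hx, ht⟩ := List.forall_mem_cons.1 hw
    have := ih ht
    have : x = 1 ∨ x = 2 ∨ x = 3 := by omega
    rcases this with rfl | rfl | rfl <;> simp <;> omega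

/-- The words of which `N3 a b c` is the number. -/
def ReflectionWord (a b c : ℕ) (w : List ℕ) : Prop :=
  (∀ x ∈ w, 1 ≤ x ∧ x ≤ 3) ∧ DownUpAlt w ∧ (w = [] ∨ 2 ≤ w.headI) ∧
    w.count 1 = a ∧ w.count 2 = b ∧ w.count 3 = c

theorem finite_reflectionWord (a b c : ℕ) : Finite {w : List ℕ // ReflectionWord a b c w} := by
  refine Set.Finite.subset (List.finite_toSet
    (List.replicate a 1 ++ List.replicate b 2 ++ List.replicate c 3).permutations) ?_
  rintro w ⟨hw, -, -, h1, h2, h3⟩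
  refine List.mem_permutations.2 (List.perm_iff_count.2 fun x => ?_)
  simp only [List.count_append, List.count_replicate, beq_iff_eq]
  by_cases hx : x = 1 ∨ x = 2 ∨ x = 3
  · rcases hx with rfl | rfl | rfl <;> simp [h1, h2, h3]
  · have : x ∉ w := fun hm => hx (by have := hw x hm; omega)
    rw [List.count_eq_zero_of_not_mem this]
    grind

theorem N3_ne_zero_iff {a b c : ℕ} : N3 a b c ≠ 0 ↔ ∃ w, ReflectionWord a b c w := by
  have := finite_reflectionWord a b c
  change Nat.card {w : List ℕ // ReflectionWord a b c w} ≠ 0 ↔ _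
  rw [Nat.card_ne_zero, nonempty_subtype]
  exact and_iff_left this

theorem DownUpAlt.count_bounds {n : ℕ} {w : List ℕ} (hlen : w.length = 2 * n + 1)
    (hw : ∀ x ∈ w, 1 ≤ x ∧ x ≤ 3) (halt : DownUpAlt w) (hhead : 2 ≤ w.headI) :
    w.count 1 ≤ n ∧ w.count 3 ≤ n + 1 ∧ (w.count 1 = n ∨ w.count 2 ≤ n) := by
  induction n generalizing w with
  | zero =>
    obtain ⟨x, rfl⟩ := List.length_eq_one_iff.1 hlen
    simp only [List.headI_cons] at hhead
    have : x ≠ 1 := by omega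
    simp only [List.count_singleton]
    grind
  | succ n ih =>
    match w, hlen with
    | x :: y :: z :: t, hlen =>
      obtain ⟨hyx, hyz, halt⟩ := downUpAlt_cons_cons_cons.1 halt
      simp only [List.forall_mem_cons] at hw
      obtain ⟨hx, hy, hzt⟩ := hw
      have hzt' : ∀ u ∈ z :: t, 1 ≤ u ∧ u ≤ 3 := List.forall_mem_cons.2 hzt
      have hlen' : (z :: t).length = 2 * n + 1 := by simp at hlen ⊢; omega
      have hsum := count_add_count_add_count_eq_length hzt'
      have hb := ih hlen' hzt' halt (by simp only [List.headI_cons]; omega)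
      have hz : y = 2 → 1 ≤ (z :: t).count 3 := by
        intro h
        obtain rfl : z = 3 := by omega
        simp
      rw [List.count_cons (a := 1), List.count_cons (a := 1), List.count_cons (a := 2),
        List.count_cons (a := 2), List.count_cons (a := 3), List.count_cons (a := 3)]
      generalize (z :: t).count 1 = p at *
      generalize (z :: t).count 2 = q at *
      generalize (z :: t).count 3 = r at *
      have hxy : x = 2 ∧ y = 1 ∨ x = 3 ∧ y = 1 ∨ x = 3 ∧ y = 2 := by omega
      rcases hxy with ⟨rfl, rfl⟩ | ⟨rfl, rfl⟩ | ⟨rfl, rfl⟩ <;> simp <;> simp at hz <;> omega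

theorem ReflectionWord.cons_cons {a b c x y z : ℕ} {t : List ℕ}
    (h : ReflectionWord a b c (z :: t)) (hy : 1 ≤ y) (hx : x ≤ 3) (hyx : y < x) (hyz : y < z) :
    ReflectionWord ((x :: y :: z :: t).count 1) ((x :: y :: z :: t).count 2)
      ((x :: y :: z :: t).count 3) (x :: y :: z :: t) := by
  refine ⟨?_, downUpAlt_cons_cons_cons.2 ⟨hyx, hyz, h.2.1⟩, Or.inr ?_, rfl, rfl, rfl⟩
  · rw [List.forall_mem_cons, List.forall_mem_cons]
    exact ⟨by omega, by omega, h.1⟩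
  · simp only [List.headI_cons]; omega

theorem exists_reflectionWord_no_threes (n : ℕ) :
    ∃ t, ReflectionWord n (n + 1) 0 (2 :: t) := by
  induction n with
  | zero => exact ⟨[], by simp [ReflectionWord, downUpAlt_singleton]⟩
  | succ n ih =>
    obtain ⟨t, ht⟩ := ih
    refine ⟨1 :: 2 :: t, ?_⟩
    have h := ht.cons_cons (x := 2) (y := 1) (by simp) (by simp) (by simp) (by simp)
    obtain ⟨-, -, -, h1, h2, h3⟩ := ht
    convert h using 1 <;> simp at h1 h2 h3 ⊢ <;> omega

theorem exists_reflectionWord_three_cons {n a b c : ℕ} (hsum : a + b + c = 2 * n + 1)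
    (ha : a ≤ n) (hb : b ≤ n) (hc : c ≤ n + 1) : ∃ t, ReflectionWord a b c (3 :: t) := by
  induction n generalizing a b c with
  | zero =>
    obtain ⟨rfl, rfl, rfl⟩ : a = 0 ∧ b = 0 ∧ c = 1 := by omega
    exact ⟨[], by simp [ReflectionWord, downUpAlt_singleton]⟩
  | succ n ih =>
    obtain ⟨c, rfl⟩ : ∃ d, c = d + 1 := ⟨c - 1, by omega⟩
    by_cases han : a ≤ n
    · obtain ⟨b, rfl⟩ : ∃ d, b = d + 1 := ⟨b - 1, by omega⟩
      obtain ⟨t, ht⟩ := ih (a := a) (b := b) (c := c) (by omega) han (by omega) (by omega)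
      refine ⟨2 :: 3 :: t, ?_⟩
      have h := ht.cons_cons (x := 3) (y := 2) (by simp) (by simp) (by simp) (by simp)
      obtain ⟨-, -, -, h1, h2, h3⟩ := ht
      convert h using 1 <;> simp at h1 h2 h3 ⊢ <;> omega
    · obtain rfl : a = n + 1 := by omega
      obtain ⟨z, t, hz, ht⟩ : ∃ z t, 1 < z ∧ ReflectionWord n b c (z :: t) := by
        by_cases hbn : b ≤ n
        · obtain ⟨t, ht⟩ := ih (a := n) (b := b) (c := c) (by omega) le_rfl hbn (by omega)
          exact ⟨3, t, by simp, ht⟩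
        · obtain ⟨rfl, rfl⟩ : b = n + 1 ∧ c = 0 := by omega
          obtain ⟨t, ht⟩ := exists_reflectionWord_no_threes n
          exact ⟨2, t, by simp, ht⟩
      refine ⟨1 :: z :: t, ?_⟩
      have h := ht.cons_cons (x := 3) (y := 1) (by simp) (by simp) (by simp) hz
      obtain ⟨-, -, -, h1, h2, h3⟩ := ht
      convert h using 1 <;> rw [List.count_cons, List.count_cons] <;> simp [h1, h2, h3]

theorem N3_ne_zero_iff_of_sum_eq {n a b c : ℕ} (hsum : a + b + c = 2 * n + 1) :
    N3 a b c ≠ 0 ↔ (a = n ∧ b = n + 1 ∧ c = 0) ∨ (a ≤ n ∧ b ≤ n ∧ c ≤ n + 1) := by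
  rw [N3_ne_zero_iff]
  constructor
  · rintro ⟨w, hw, halt, hhead, rfl, rfl, rfl⟩
    have hlen := count_add_count_add_count_eq_length hw
    have hne : w ≠ [] := by rintro rfl; simp at hsum
    have := halt.count_bounds (n := n) (by omega) hw (hhead.resolve_left hne)
    omega
  · rintro (⟨rfl, rfl, rfl⟩ | ⟨ha, hb, hc⟩)
    · exact (exists_reflectionWord_no_threes _).imp' _ fun _ h => h
    · exact (exists_reflectionWord_three_cons hsum ha hb hc).imp' _ fun _ h => h

theorem sum_range_add_one_eq_choose (n : ℕ) :
    ∑ a ∈ Finset.range (n + 1), (a + 1) = (n + 2).choose 2 := by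
  induction n with
  | zero => rfl
  | succ n ih => rw [Finset.sum_range_succ, ih, Nat.choose_succ_succ' (n + 2) 1]; simp; omega

/-- The nonzero contents with at most `n` twos, indexed by the number `a` of ones and by
`i ≤ a`. -/
def boundedContents (n : ℕ) : Finset (ℕ × ℕ × ℕ) :=
  ((Finset.range (n + 1)).sigma fun a => Finset.range (a + 1)).image
    fun p => (p.1, n - p.1 + p.2, n + 1 - p.2)

theorem mem_boundedContents {n a b c : ℕ} : (a, b, c) ∈ boundedContents n ↔
    a + b + c = 2 * n + 1 ∧ a ≤ n ∧ b ≤ n ∧ c ≤ n + 1 := by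
  simp only [boundedContents, Finset.mem_image, Finset.mem_sigma, Finset.mem_range, Prod.mk.injEq]
  constructor
  · rintro ⟨⟨p, i⟩, ⟨hp, hi⟩, h1, h2, h3⟩
    dsimp only at *
    omega
  · rintro ⟨hsum, ha, hb, hc⟩
    exact ⟨⟨a, n + 1 - c⟩, by dsimp only; omega, by dsimp only; omega⟩

theorem card_boundedContents (n : ℕ) : (boundedContents n).card = (n + 2).choose 2 := by
  rw [boundedContents, Finset.card_image_of_injOn, Finset.card_sigma]
  · simpa using sum_range_add_one_eq_choose n
  · rintro ⟨a, i⟩ - ⟨b, j⟩ - h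
    simp only [Prod.mk.injEq] at h
    obtain ⟨rfl, h, -⟩ := h
    obtain rfl : i = j := by omega
    rfl

theorem stmt19 (n : ℕ) (hn : 1 ≤ n) :
    Nat.card {t : ℕ × ℕ × ℕ //
      t.1 + t.2.1 + t.2.2 = 2 * n + 1 ∧ N3 t.1 t.2.1 t.2.2 ≠ 0} =
      Nat.choose (n + 2) 2 + 1 := by
  have hmem : (n, n + 1, 0) ∉ boundedContents n := by
    rw [mem_boundedContents]
    omega
  rw [← card_boundedContents, ← Finset.card_insert_of_notMem hmem]
  refine Nat.subtype_card _ fun ⟨a, b, c⟩ => ?_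
  rw [Finset.mem_insert, mem_boundedContents]
  simp only [Prod.mk.injEq]
  constructor
  · intro h
    have hsum : a + b + c = 2 * n + 1 := by omega
    exact ⟨hsum, (N3_ne_zero_iff_of_sum_eq hsum).2 (by omega)⟩
  · rintro ⟨hsum, h⟩
    have := (N3_ne_zero_iff_of_sum_eq hsum).1 h
    omega
end
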